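/- Let L be a set closed under binary operations ∧, ∨, → and a unary operation ¬, and let C : 2^L → 2^L satisfy Inclusion, Idempotence, Cautious Monotonicity, Conditional Monotonicity, Threshold Monotonicity, Weak Compactness, and the Introduction-Elimination rules: C(A ∪ {a ∧ b}) = C(A ∪ {a, b}); C(A ∪ {a, ¬a}) = L; C(A ∪ {¬a}) = L implies a ∈ C(A); C(A ∪ {a}) ∩ C(A ∪ {b}) ⊆ C(A ∪ {a ∨ b}); a ∈ C(A) implies a ∨ b ∈ C(A), and b ∈ C(A) implies a ∨ b ∈ C(A); b ∈ C(A ∪ {a}) implies a → b ∈ C(A); b ∈ C(A ∪ {a, a → b}). Then there exist a set M, a binary relation ⊨ ⊆ M × L that behaves classically for each connective (x ⊨ a ∧ b iff x ⊨ a and x ⊨ b; x ⊨ ¬a iff not x ⊨ a; x ⊨ a ∨ b iff x ⊨ a or x ⊨ b; x ⊭ a → b iff x ⊨ a and x ⊭ b), and a definability-preserving function f on definable subsets of M satisfying Contraction, Coherence and Local Monotonicity, such that C(A) = Th(f(Mod(A))) for all A ⊆ L. -/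

import Mathlib

/-- Mod(A): the set of models satisfying every formula in A. -/
def ModSet {M L : Type} (sat : M → L → Prop) (A : Set L) : Set M :=
  {x | ∀ a ∈ A, sat x a}

/-- Th(X): the set of formulas satisfied in every model of X. -/
def ThSet {M L : Type} (sat : M → L → Prop) (X : Set M) : Set L :=
  {a | ∀ x ∈ X, sat x a}

/-- A set of models is definable iff it is the set of models of its theory. -/
def IsDefinable {M L : Type} (sat : M → L → Prop) (X : Set M) : Prop :=
  X = ModSet sat (ThSet sat X)

/-- Representation with classical connectives: an operation with the five
structural properties, Weak Compactness and the Introduction-Elimination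
rules is generated by a classical satisfaction relation and a
definability-preserving choice function. -/
theorem stmt_18 {L : Type}
    (conj disj impl : L → L → L) (neg : L → L)
    (C : Set L → Set L)
    (hIncl : ∀ A : Set L, A ⊆ C A)
    (hIdem : ∀ A : Set L, C (C A) = C A)
    (hCM : ∀ A B : Set L, A ⊆ B → B ⊆ C A → C A ⊆ C B)
    (hCondM : ∀ A B : Set L, C (A ∪ B) ⊆ C (C A ∪ B))
    (hThr : ∀ A B B' : Set L, C A ⊆ B → B ⊆ B' → C B ⊆ C B')
    (hWC : ∀ A : Set L, C A = Set.univ →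
      ∃ B : Set L, B ⊆ A ∧ B.Finite ∧ C B = Set.univ)
    (hAnd : ∀ (A : Set L) (a b : L), C (A ∪ {conj a b}) = C (A ∪ {a, b}))
    (hNegI : ∀ (A : Set L) (a : L), C (A ∪ {a, neg a}) = Set.univ)
    (hNegE : ∀ (A : Set L) (a : L), C (A ∪ {neg a}) = Set.univ → a ∈ C A)
    (hOrL : ∀ (A : Set L) (a b : L),
      C (A ∪ {a}) ∩ C (A ∪ {b}) ⊆ C (A ∪ {disj a b}))
    (hOrR₁ : ∀ (A : Set L) (a b : L), a ∈ C A → disj a b ∈ C A)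
    (hOrR₂ : ∀ (A : Set L) (a b : L), b ∈ C A → disj a b ∈ C A)
    (hImpR : ∀ (A : Set L) (a b : L), b ∈ C (A ∪ {a}) → impl a b ∈ C A)
    (hImpL : ∀ (A : Set L) (a b : L), b ∈ C (A ∪ {a, impl a b})) :
    ∃ (M : Type) (sat : M → L → Prop) (f : Set M → Set M),
      (∀ (x : M) (a b : L), sat x (conj a b) ↔ sat x a ∧ sat x b) ∧
      (∀ (x : M) (a : L), sat x (neg a) ↔ ¬ sat x a) ∧
      (∀ (x : M) (a b : L), sat x (disj a b) ↔ sat x a ∨ sat x b) ∧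
      (∀ (x : M) (a b : L), ¬ sat x (impl a b) ↔ sat x a ∧ ¬ sat x b) ∧
      (∀ A : Set L,
        f (ModSet sat A) = ModSet sat (ThSet sat (f (ModSet sat A)))) ∧
      (∀ X : Set M, IsDefinable sat X → f X ⊆ X) ∧
      (∀ X Y : Set M, IsDefinable sat X → IsDefinable sat Y →
        X ⊆ Y → X ∩ f Y ⊆ f X) ∧
      (∀ X Y : Set M, IsDefinable sat X → IsDefinable sat Y →
        f X ⊆ Y → Y ⊆ X → f Y ⊆ f X) ∧
      (∀ A : Set L, C A = ThSet sat (f (ModSet sat A))) := by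
  classical
  have up : ∀ B S : Set L, B ⊆ S → C B = Set.univ → C S = Set.univ := by
    intro B S h hB
    have := hCM B S h (by rw [hB]; exact Set.subset_univ _)
    rw [hB] at this
    exact Set.univ_subset_iff.mp this
  have cut : ∀ A B : Set L, A ⊆ B → B ⊆ C A → C B = C A := by
    intro A B h1 h2
    apply Set.Subset.antisymm
    · have := hCondM A B
      rwa [Set.union_eq_self_of_subset_left h1, Set.union_eq_self_of_subset_right h2, hIdem] at this
    · exact hCM A B h1 h2
  let MC : Set L → Prop := fun x => C x ≠ Set.univ ∧ ∀ y, x ⊆ y → C y ≠ Set.univ → y ⊆ x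
  have lind : ∀ A : Set L, C A ≠ Set.univ → ∃ x, A ⊆ x ∧ MC x := by
    intro A hA
    obtain ⟨m, hAm, hm⟩ := zorn_subset_nonempty {x : Set L | C x ≠ Set.univ} (by
      intro c hc hch hne
      refine ⟨⋃₀ c, ?_, fun s hs => Set.subset_sUnion_of_mem hs⟩
      intro hU
      obtain ⟨B, hB, hfin, hBU⟩ := hWC _ hU
      obtain ⟨t, ht, hBt⟩ := DirectedOn.exists_mem_subset_of_finite_of_subset_sUnion hne
        hch.directedOn hfin hB
      exact hc ht (up B t hBt hBU)) A hA
    exact ⟨m, hAm, hm.1, fun y hxy hy => hm.2 hy hxy⟩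
  have mcC : ∀ x, MC x → C x = x := fun x hx =>
    Set.Subset.antisymm (hx.2 _ (hIncl x) (by rw [hIdem]; exact hx.1)) (hIncl x)
  have mcadd : ∀ x, MC x → ∀ a, C (x ∪ {a}) ≠ Set.univ → a ∈ x := fun x hx a h =>
    hx.2 _ Set.subset_union_left h (Or.inr rfl)
  have abs1 : ∀ (x : Set L) (a : L), a ∈ x → x ∪ {a} = x := fun x a h =>
    Set.union_eq_self_of_subset_right (by simpa using h)
  have abs2 : ∀ (x : Set L) (a b : L), a ∈ x → b ∈ x → x ∪ {a, b} = x := fun x a b h h' =>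
    Set.union_eq_self_of_subset_right (by rintro y (rfl | rfl) <;> assumption)
  have mneg : ∀ x, MC x → ∀ a, neg a ∈ x ↔ a ∉ x := by
    intro x hx a
    constructor
    · intro h1 h2
      have := hNegI x a
      rw [abs2 x _ _ h2 h1] at this
      exact hx.1 this
    · intro h
      apply mcadd x hx
      intro h1
      have := hNegE x a h1
      rw [mcC x hx] at this
      exact h this
  have sep : ∀ (A : Set L) (a : L), (∀ x, MC x → C A ⊆ x → a ∈ x) → a ∈ C A := by
    intro A a h
    by_contra hn
    have h1 : C (C A ∪ {neg a}) ≠ Set.univ := by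
      intro h1
      have := hNegE _ _ h1
      rw [hIdem] at this
      exact hn this
    obtain ⟨x, hsub, hx⟩ := lind _ h1
    exact (mneg x hx a).1 (hsub (Or.inr rfl)) (h x hx (Set.subset_union_left.trans hsub))
  let sat : {x : Set L // MC x} → L → Prop := fun x a => a ∈ x.1
  have TM : ∀ A, ThSet sat (ModSet sat (C A)) = C A := by
    intro A
    apply Set.Subset.antisymm
    · intro a ha
      exact sep A a (fun x hx hsub => ha ⟨x, hx⟩ (fun b hb => hsub hb))
    · intro a ha x hx
      exact hx a ha
  have MTM : ∀ A, ModSet sat (ThSet sat (ModSet sat A)) = ModSet sat A := by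
    intro A
    apply Set.Subset.antisymm
    · intro x hx a ha
      exact hx a (fun y hy => hy a ha)
    · intro x hx a ha
      exact ha x hx
  have Cn : ∀ A, C (ThSet sat (ModSet sat A)) = C A := by
    intro A
    apply cut
    · intro a ha x hx
      exact hx a ha
    · rw [← TM A]
      intro a ha x hx
      exact ha x (fun b hb => hx b (hIncl A hb))
  refine ⟨{x : Set L // MC x}, sat, fun X => ModSet sat (C (ThSet sat X)),
    ?_, ?_, ?_, ?_, ?_, ?_, ?_, ?_, ?_⟩
  · rintro ⟨x, hx⟩ a b
    change conj a b ∈ x ↔ a ∈ x ∧ b ∈ x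
    constructor
    · intro h
      have h1 := hAnd x a b
      rw [abs1 x _ h] at h1
      have h2 := hx.2 (x ∪ {a, b}) Set.subset_union_left (by rw [← h1]; exact hx.1)
      exact ⟨h2 (Or.inr (Or.inl rfl)), h2 (Or.inr (Or.inr rfl))⟩
    · rintro ⟨h1, h2⟩
      apply mcadd x hx
      rw [hAnd, abs2 x _ _ h1 h2]
      exact hx.1
  · rintro ⟨x, hx⟩ a
    exact mneg x hx a
  · rintro ⟨x, hx⟩ a b
    change disj a b ∈ x ↔ a ∈ x ∨ b ∈ x
    have e := mcC x hx
    constructor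
    · intro h
      by_contra hn
      push Not at hn
      have h1 : C (x ∪ {a}) = Set.univ := by
        by_contra h1
        exact hn.1 (mcadd x hx a h1)
      have h2 : C (x ∪ {b}) = Set.univ := by
        by_contra h1
        exact hn.2 (mcadd x hx b h1)
      have h3 := hOrL x a b
      rw [h1, h2, abs1 x _ h, Set.univ_inter] at h3
      exact hx.1 (Set.univ_subset_iff.mp h3)
    · have h1 := hOrR₁ x a b
      have h2 := hOrR₂ x a b
      rw [e] at h1 h2
      rintro (h | h)
      · exact h1 h
      · exact h2 h
  · rintro ⟨x, hx⟩ a b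
    change impl a b ∉ x ↔ a ∈ x ∧ b ∉ x
    have e := mcC x hx
    constructor
    · intro h
      have h1 : b ∉ C (x ∪ {a}) := fun h1 => h (by
        have := hImpR x a b h1
        rwa [e] at this)
      exact ⟨mcadd x hx a (fun h2 => h1 (by rw [h2]; trivial)),
        fun hb => h1 (hIncl _ (Or.inl hb))⟩
    · rintro ⟨h1, h2⟩ h3
      have := hImpL x a b
      rw [abs2 x _ _ h1 h3, e] at this
      exact h2 this
  · intro A
    exact (MTM _).symm
  · intro X hX x hx
    rw [hX]
    exact fun a ha => hx a (hIncl _ ha)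
  · rintro X Y hX hY hXY ⟨x, hx⟩ ⟨h1, h2⟩
    intro a ha
    have hsub : ThSet sat Y ⊆ ThSet sat X := fun b hb y hy => hb y (hXY hy)
    have h3 := hCondM (ThSet sat Y) (ThSet sat X)
    rw [Set.union_eq_self_of_subset_left hsub] at h3
    have h4 := hThr (ThSet sat Y) (C (ThSet sat Y) ∪ ThSet sat X) x Set.subset_union_left
      (Set.union_subset (fun b hb => h2 b hb) (fun b hb => hb _ h1))
    rw [mcC x hx] at h4
    exact h4 (h3 ha)
  · intro X Y hX hY h1 h2 x hx a ha
    have h3 : ThSet sat X ⊆ ThSet sat Y := fun b hb y hy => hb y (h2 hy)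
    refine hx a (hCM (ThSet sat X) (ThSet sat Y) h3 ?_ ha)
    rw [← TM (ThSet sat X)]
    exact fun b hb y hy => hb y (h1 hy)
  · intro A
    change C A = ThSet sat (ModSet sat (C (ThSet sat (ModSet sat A))))
    rw [Cn, TM]
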